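/- Let Ω ⊆ ℝⁿ be a C¹ domain, let a : [0,∞) → ℝ be continuous on [0,∞), C¹ and positive on (0,∞) with (t·a(t))′ > 0 on (0,∞), let f ∈ C¹(ℝ), and let u ∈ C¹(cl Ω) be a non-constant weak solution of Δ_a u + f(u) = 0 in Ω with u locally constant on ∂Ω. Let Ω₀ be a connected component of Ω ∖ crit(u) such that u ∈ C²(Ω₀) and such that for every x ∈ Ω₀ and all X, Y ∈ ℝⁿ with ⟨X, ∇u(x)⟩ = 0 one has Hess u(x)(X, Y) = 0 (equivalently: ∇ᵀ|∇u| ≡ 0 and the second fundamental form of the level sets of u vanishes identically in Ω₀). Then there exist a unit vector e ∈ ℝⁿ, an open interval I ⊆ ℝ and a differentiable function u₀ : I → ℝ with u₀′ > 0 on I such that Ω₀ = {x ∈ ℝⁿ : ⟨x, e⟩ ∈ I} and u(x) = u₀(⟨x, e⟩) for all x ∈ Ω₀. -/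

import Mathlib

open MeasureTheory Set Metric Filter
open scoped RealInnerProductSpace Topology ENNReal

noncomputable section

variable {n : ℕ}

/-- The quasilinear operator matrix `A(p)` applied to a vector `v`:
`A(p)v = a(|p|) v + (a'(|p|)/|p|) ⟨p,v⟩ p` (with the second term vanishing at `p = 0`). -/
def Aop (a : ℝ → ℝ) (p v : EuclideanSpace ℝ (Fin n)) : EuclideanSpace ℝ (Fin n) :=
  a ‖p‖ • v + ((deriv a ‖p‖ / ‖p‖) * ⟪p, v⟫) • p

/-- `λ₁(t) = a(t) + t·a'(t) = (t a(t))'`. -/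
def lam1 (a : ℝ → ℝ) (t : ℝ) : ℝ := a t + t * deriv a t

/-- `λ₂(t) = a(t)`. -/
def lam2 (a : ℝ → ℝ) (t : ℝ) : ℝ := a t

/-- `λmax(t) = max{λ₁(t), λ₂(t)}`. -/
def lamMax (a : ℝ → ℝ) (t : ℝ) : ℝ := max (lam1 a t) (lam2 a t)

/-- A Lipschitz test function with compact support contained in `Ω`. -/
def IsTestOn (Ω : Set (EuclideanSpace ℝ (Fin n))) (φ : EuclideanSpace ℝ (Fin n) → ℝ) : Prop :=
  (∃ K, LipschitzWith K φ) ∧ HasCompactSupport φ ∧ tsupport φ ⊆ Ω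

/-- `u` is a weak solution of `div(a(|∇u|)∇u) + f(u) = 0` in `Ω`. -/
def IsWeakSolution (a f : ℝ → ℝ) (Ω : Set (EuclideanSpace ℝ (Fin n)))
    (u : EuclideanSpace ℝ (Fin n) → ℝ) : Prop :=
  ∀ φ : EuclideanSpace ℝ (Fin n) → ℝ, IsTestOn Ω φ →
    ∫ x in Ω, a ‖gradient u x‖ * ⟪gradient u x, gradient φ x⟫
      = ∫ x in Ω, f (u x) * φ x

/-- The stability inequality for a solution `u`. -/
def IsStable (a f : ℝ → ℝ) (Ω : Set (EuclideanSpace ℝ (Fin n)))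
    (u : EuclideanSpace ℝ (Fin n) → ℝ) : Prop :=
  ∀ φ : EuclideanSpace ℝ (Fin n) → ℝ, IsTestOn Ω φ →
    ∫ x in Ω, deriv f (u x) * φ x ^ 2
      ≤ ∫ x in Ω, ⟪Aop a (gradient u x) (gradient φ x), gradient φ x⟫

/-- `u` has moderate energy growth in `Ω₀`. -/
def ModerateEnergyGrowth (a : ℝ → ℝ) (u : EuclideanSpace ℝ (Fin n) → ℝ)
    (Ω₀ : Set (EuclideanSpace ℝ (Fin n))) : Prop :=
  ∃ φ : ℕ → EuclideanSpace ℝ (Fin n) → ℝ,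
    (∀ j, ∃ K, LipschitzWith K (φ j)) ∧
    (∀ j, HasCompactSupport (φ j)) ∧
    (∀ j x, 0 ≤ φ j x) ∧
    (∀ K : Set (EuclideanSpace ℝ (Fin n)), IsCompact K → K ⊆ closure Ω₀ →
      TendstoUniformlyOn (fun j => φ j) (fun _ => (1 : ℝ)) atTop K) ∧
    Tendsto (fun j => ∫ x in Ω₀, ‖gradient u x‖ ^ 2 *
        ⟪Aop a (gradient u x) (gradient (φ j) x), gradient (φ j) x⟫)
      atTop (nhds 0)

/-- A `C^k` domain: nonempty, open, connected, with boundary locally given by a regular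
`C^k` defining function. -/
def IsCkDomain (k : ℕ∞) (Ω : Set (EuclideanSpace ℝ (Fin n))) : Prop :=
  Ω.Nonempty ∧ IsOpen Ω ∧ IsConnected Ω ∧
    ∀ p ∈ frontier Ω, ∃ V : Set (EuclideanSpace ℝ (Fin n)),
      ∃ g : EuclideanSpace ℝ (Fin n) → ℝ,
        IsOpen V ∧ p ∈ V ∧ ContDiffOn ℝ k g V ∧ (∀ x ∈ V, gradient g x ≠ 0) ∧
        Ω ∩ V = {x ∈ V | g x < 0}

/-- A `C^k` domain together with its interior unit normal field `η`. -/
def IsCkDomainWithNormal (k : ℕ∞) (Ω : Set (EuclideanSpace ℝ (Fin n)))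
    (η : EuclideanSpace ℝ (Fin n) → EuclideanSpace ℝ (Fin n)) : Prop :=
  Ω.Nonempty ∧ IsOpen Ω ∧ IsConnected Ω ∧
    ∀ p ∈ frontier Ω, ∃ V : Set (EuclideanSpace ℝ (Fin n)),
      ∃ g : EuclideanSpace ℝ (Fin n) → ℝ,
        IsOpen V ∧ p ∈ V ∧ ContDiffOn ℝ k g V ∧ (∀ x ∈ V, gradient g x ≠ 0) ∧
        Ω ∩ V = {x ∈ V | g x < 0} ∧
        η p = -(‖gradient g p‖⁻¹ • gradient g p)

/-- `a ∈ C^{1,1}_loc([0,∞))`: `C¹` on `[0,∞)` with locally Lipschitz derivative. -/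
def C11Loc (a : ℝ → ℝ) : Prop :=
  ContDiffOn ℝ 1 a (Ici 0) ∧
    ∀ t ∈ Ici (0 : ℝ), ∃ V ∈ 𝓝[Ici (0 : ℝ)] t, ∃ K, LipschitzOnWith K (deriv a) V

/-!
The Hessian condition says that `∇u` is constant along directions orthogonal to it; as the Hessian
is symmetric, its range is spanned by `∇u`, so `∇u / |∇u|` has zero derivative and equals a fixed
unit vector `e` on `Ω₀`. For `v ⟂ e` both `u` and `∇u` are then constant along the segments
`x + [0, s) v ⊆ Ω₀`. The point `y` where such a ray would leave `Ω₀` is not critical, hence lies on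
`∂Ω`, and `u` takes the value `u y` at points of `Ω` arbitrarily close to `y`. But near a boundary
point with `∇u ≠ 0` this cannot happen: there is a direction `d` pointing out of `Ω` with
`⟨∇u, d⟩ ≠ 0`, a point `z ∈ Ω` near `y` is joined along `d` to a boundary point, where `u` equals
`u y`, and Rolle's theorem excludes `u z = u y`. So `Ω₀` is a union of hyperplanes orthogonal to
`e`, on each of which `u` is constant.
-/

section Topology

variable {X : Type*} [TopologicalSpace X]

lemma mapsTo_Icc_closure_of_mapsTo_Ico {γ : ℝ → X} {U : Set X} {a b : ℝ} (hγ : Continuous γ)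
    (hab : a ≠ b) (h : MapsTo γ (Ico a b) U) : MapsTo γ (Icc a b) (closure U) := by
  simpa only [closure_Ico hab] using h.closure hγ

lemma exists_mapsTo_Ico_and_mem_frontier {γ : ℝ → X} {U : Set X} {a b : ℝ} (hγ : Continuous γ)
    (hU : IsOpen U) (hab : a ≤ b) (ha : γ a ∈ U) (hb : γ b ∉ U) :
    ∃ s ∈ Ioc a b, MapsTo γ (Ico a s) U ∧ γ s ∈ frontier U := by
  have hcompact : IsCompact (Icc a b ∩ γ ⁻¹' Uᶜ) :=
    isCompact_Icc.inter_right (hU.isClosed_compl.preimage hγ)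
  obtain ⟨s, ⟨hs, hsU⟩, hleast⟩ := hcompact.exists_isLeast ⟨b, right_mem_Icc.mpr hab, hb⟩
  have has : a < s := hs.1.lt_of_ne fun h => hsU (h ▸ ha)
  have hbefore : MapsTo γ (Ico a s) U := fun t ht =>
    not_not.mp fun htU => (hleast ⟨⟨ht.1, ht.2.le.trans hs.2⟩, htU⟩).not_gt ht.2
  refine ⟨s, ⟨has, hs.2⟩, hbefore, ?_⟩
  rw [hU.frontier_eq]
  exact ⟨mapsTo_Icc_closure_of_mapsTo_Ico hγ has.ne hbefore (right_mem_Icc.mpr has.le), hsU⟩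

lemma closure_connectedComponentIn_inter_subset (F : Set X) (x : X) :
    closure (connectedComponentIn F x) ∩ F ⊆ connectedComponentIn F x := by
  rintro y ⟨hy, hyF⟩
  have hx : x ∈ connectedComponentIn F x := mem_connectedComponentIn
    (connectedComponentIn_nonempty_iff.mp (closure_nonempty_iff.mp ⟨y, hy⟩))
  have hins : IsPreconnected (insert y (connectedComponentIn F x)) :=
    isPreconnected_connectedComponentIn.subset_closure (subset_insert _ _)
      (insert_subset hy subset_closure)
  exact hins.subset_connectedComponentIn (mem_insert_of_mem _ hx)
    (insert_subset hyF (connectedComponentIn_subset F x)) (mem_insert _ _)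

end Topology

section Lines

variable {E F : Type*} [NormedAddCommGroup E] [NormedSpace ℝ E] [NormedAddCommGroup F]
  [NormedSpace ℝ F] {f : E → F}

lemma hasDerivAt_comp_add_smul {x v : E} {t : ℝ} (hf : DifferentiableAt ℝ f (x + t • v)) :
    HasDerivAt (fun s : ℝ => f (x + s • v)) (fderiv ℝ f (x + t • v) v) t := by
  have hline : HasDerivAt (fun s : ℝ => x + s • v) v t := by
    simpa using ((hasDerivAt_id t).smul_const v).const_add x
  exact hf.hasFDerivAt.comp_hasDerivAt t hline

lemma eq_along_segment_of_fderiv_apply_eq_zero {U : Set E} {x v : E} {s : ℝ}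
    (hf : ContinuousOn f (closure U)) (hdiff : ∀ y ∈ U, DifferentiableAt ℝ f y)
    (hzero : ∀ y ∈ U, fderiv ℝ f y v = 0) (hs : 0 < s)
    (hseg : MapsTo (fun t : ℝ => x + t • v) (Ico 0 s) U) :
    ∀ t ∈ Icc 0 s, f (x + t • v) = f x := by
  have hline : Continuous fun t : ℝ => x + t • v := by fun_prop
  have hcont : ContinuousOn (fun t : ℝ => f (x + t • v)) (Icc 0 s) :=
    hf.comp hline.continuousOn (mapsTo_Icc_closure_of_mapsTo_Ico hline hs.ne hseg)
  have hderiv : ∀ t ∈ Ico 0 s, HasDerivWithinAt (fun t : ℝ => f (x + t • v)) 0 (Ici t) t := by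
    intro t ht
    rw [← hzero _ (hseg ht)]
    exact (hasDerivAt_comp_add_smul (hdiff _ (hseg ht))).hasDerivWithinAt
  simpa using constant_of_has_deriv_right_zero hcont hderiv

end Lines

section InnerProduct

variable {E : Type*} [NormedAddCommGroup E] [InnerProductSpace ℝ E]

lemma real_inner_smul_left_self_of_norm_eq_one {e : E} (he : ‖e‖ = 1) (t : ℝ) :
    ⟪t • e, e⟫ = t := by
  rw [real_inner_smul_left, real_inner_self_eq_norm_sq, he, one_pow, mul_one]

lemma exists_inner_pos_and_inner_ne_zero {ν w : E} (hν : ν ≠ 0) (hw : w ≠ 0) :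
    ∃ d : E, 0 < ⟪ν, d⟫ ∧ ⟪w, d⟫ ≠ 0 := by
  by_cases h : ⟪w, ν⟫ = 0
  · refine ⟨ν + w, ?_, ?_⟩
    · rw [inner_add_right, real_inner_comm w ν, h, add_zero]
      exact real_inner_self_pos.mpr hν
    · rw [inner_add_right, h, zero_add]
      exact inner_self_ne_zero.mpr hw
  · exact ⟨ν, real_inner_self_pos.mpr hν, h⟩

lemma apply_mem_span_singleton_of_isSymmetric {T : E →ₗ[ℝ] E} (hT : T.IsSymmetric) {g : E}
    (hker : ∀ x, ⟪x, g⟫ = 0 → T x = 0) (w : E) : T w ∈ Submodule.span ℝ {g} := by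
  rw [← Submodule.orthogonal_orthogonal (Submodule.span ℝ {g}), Submodule.mem_orthogonal]
  intro x hx
  rw [← hT, hker x (Submodule.mem_orthogonal_singleton_iff_inner_left.mp hx), inner_zero_left]

lemma differentiableAt_normalize {x : E} (hx : x ≠ 0) :
    DifferentiableAt ℝ (NormedSpace.normalize : E → E) x :=
  ((differentiableAt_id.norm ℝ hx).inv (norm_ne_zero_iff.mpr hx)).smul differentiableAt_id

lemma fderiv_normalize_apply_self {x : E} (hx : x ≠ 0) :
    fderiv ℝ (NormedSpace.normalize : E → E) x x = 0 := by
  have hderiv := hasDerivAt_comp_add_smul (f := (NormedSpace.normalize : E → E)) (x := x) (v := x)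
    (t := 0) (by simpa using differentiableAt_normalize hx)
  have hray : (fun t : ℝ => NormedSpace.normalize (x + t • x)) =ᶠ[𝓝 0]
      fun _ => NormedSpace.normalize x := by
    filter_upwards [lt_mem_nhds (show (-1 : ℝ) < 0 by norm_num)] with t ht
    rw [show x + t • x = (1 + t) • x by module,
      NormedSpace.normalize_smul_of_pos (by linarith)]
  simpa using hderiv.unique ((hasDerivAt_const 0 _).congr_of_eventuallyEq hray)

lemma normalize_eq_of_fderiv_mem_span {F : Type*} [NormedAddCommGroup F] [NormedSpace ℝ F]
    {G : F → E} {U : Set F} (hU : IsOpen U) (hUc : IsPreconnected U)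
    (hG : ∀ x ∈ U, DifferentiableAt ℝ G x) (hG0 : ∀ x ∈ U, G x ≠ 0)
    (hspan : ∀ x ∈ U, ∀ w, fderiv ℝ G x w ∈ Submodule.span ℝ {G x}) {x y : F} (hx : x ∈ U)
    (hy : y ∈ U) : NormedSpace.normalize (G x) = NormedSpace.normalize (G y) := by
  have hdiff : ∀ z ∈ U, DifferentiableAt ℝ (NormedSpace.normalize ∘ G) z := fun z hz =>
    (differentiableAt_normalize (hG0 z hz)).comp z (hG z hz)
  have hzero : ∀ z ∈ U, fderiv ℝ (NormedSpace.normalize ∘ G) z = 0 := by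
    intro z hz
    ext w
    obtain ⟨c, hc⟩ := Submodule.mem_span_singleton.mp (hspan z hz w)
    rw [fderiv_comp z (differentiableAt_normalize (hG0 z hz)) (hG z hz),
      ContinuousLinearMap.comp_apply, ← hc, map_smul, fderiv_normalize_apply_self (hG0 z hz),
      smul_zero, zero_apply]
  exact hU.is_const_of_fderiv_eq_zero hUc
    (fun z hz => (hdiff z hz).differentiableWithinAt) hzero hx hy

lemma exists_isOpen_ordConnected_eq_setOf_inner_mem {U : Set E} {e : E} (hU : IsOpen U)
    (hUc : IsPreconnected U) (he : ‖e‖ = 1)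
    (hinv : ∀ x ∈ U, ∀ v, ⟪v, e⟫ = 0 → x + v ∈ U) :
    ∃ I : Set ℝ, IsOpen I ∧ I.OrdConnected ∧ U = {x | ⟪x, e⟫ ∈ I} := by
  have hee := real_inner_smul_left_self_of_norm_eq_one he
  have hmem {x y : E} (hx : x ∈ U) (hxy : ⟪x, e⟫ = ⟪y, e⟫) : y ∈ U := by
    simpa using hinv x hx (y - x) (by rw [inner_sub_left, hxy, sub_self])
  have himage : (fun x => ⟪x, e⟫) '' U = {t : ℝ | t • e ∈ U} := by
    ext t
    refine ⟨?_, fun ht => ⟨t • e, ht, hee t⟩⟩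
    rintro ⟨x, hx, rfl⟩
    exact hmem hx (hee _).symm
  refine ⟨{t : ℝ | t • e ∈ U}, hU.preimage (by fun_prop), ?_, ?_⟩
  · rw [← himage]
    exact (hUc.image _ (by fun_prop)).ordConnected
  · ext x
    exact ⟨fun hx => hmem hx (hee _).symm, fun hx => hmem hx (hee _)⟩

/-- `ν` is an outward normal direction of `Ω` at `p`, in a form that asks for no regularity of the
boundary: along every direction making an acute angle with `ν` there are points exterior to `Ω`
arbitrarily close to `p`. The vector `ν` need not be a unit vector. -/
def IsOuterNormal (Ω : Set E) (p ν : E) : Prop :=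
  ν ≠ 0 ∧ ∀ d, 0 < ⟪ν, d⟫ → ∃ᶠ t in 𝓝[>] (0 : ℝ), p + t • d ∉ closure Ω

lemma IsOuterNormal.eventually_exists_exit {Ω : Set E} {p ν d : E} (hν : IsOuterNormal Ω p ν)
    (hΩ : IsOpen Ω) (hd : 0 < ⟪ν, d⟫) {N : Set E} (hN : N ∈ 𝓝 p) :
    ∀ᶠ z in 𝓝[Ω] p, ∃ s : ℝ, 0 < s ∧ MapsTo (fun t : ℝ => z + t • d) (Ico 0 s) Ω ∧
      z + s • d ∈ frontier Ω ∧ MapsTo (fun t : ℝ => z + t • d) (Icc 0 s) N := by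
  have hcont : Tendsto (fun q : ℝ × E => q.2 + q.1 • d) (𝓝 0 ×ˢ 𝓝 p) (𝓝 p) := by
    rw [← nhds_prod_eq]
    exact Continuous.tendsto' (by fun_prop) _ _ (by simp)
  obtain ⟨small, hsmall, near, hnear, hin⟩ := eventually_prod_iff.mp (hcont.eventually_mem hN)
  obtain ⟨ε, hε, hball⟩ := Metric.eventually_nhds_iff.mp hsmall
  obtain ⟨T, hTout, hT0, hTε⟩ :=
    ((hν.2 d hd).and_eventually (Ioo_mem_nhdsGT hε)).exists
  have hleave : ∀ᶠ z in 𝓝 p, z + T • d ∉ closure Ω :=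
    (show Continuous fun z : E => z + T • d by fun_prop).continuousAt.eventually
      (isClosed_closure.isOpen_compl.mem_nhds hTout)
  filter_upwards [nhdsWithin_le_nhds hleave, nhdsWithin_le_nhds hnear, self_mem_nhdsWithin]
    with z hzout hznear hzΩ
  obtain ⟨s, hs, hbefore, hfr⟩ := exists_mapsTo_Ico_and_mem_frontier
    (show Continuous fun t : ℝ => z + t • d by fun_prop) hΩ hT0.le (by simpa using hzΩ)
    fun h => hzout (subset_closure h)
  refine ⟨s, hs.1, hbefore, hfr, fun t ht => hin (hball ?_) hznear⟩
  rw [Real.dist_0_eq_abs, abs_of_nonneg ht.1]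
  exact (ht.2.trans hs.2).trans_lt hTε

end InnerProduct

section Gradient

variable {E : Type*} [NormedAddCommGroup E] [InnerProductSpace ℝ E] [CompleteSpace E]
  {Ω U : Set E} {u : E → ℝ} {Du : E → E}

lemma hasDerivAt_comp_smul_of_gradient_eq {e : E} {c t : ℝ} (he : ‖e‖ = 1)
    (hu : DifferentiableAt ℝ u (t • e)) (hgrad : gradient u (t • e) = c • e) :
    HasDerivAt (fun t : ℝ => u (t • e)) c t := by
  have hderiv := hasDerivAt_comp_add_smul (x := 0) (v := e) (t := t) (by simpa using hu)
  simpa only [zero_add, ← inner_gradient_left, hgrad,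
    real_inner_smul_left_self_of_norm_eq_one he] using hderiv

lemma differentiableAt_gradient {x : E} (hu : ContDiffAt ℝ 2 u x) :
    DifferentiableAt ℝ (gradient u) x :=
  (InnerProductSpace.toDual ℝ E).symm.differentiable.differentiableAt.comp x
    ((hu.fderiv_right (m := 1) (by norm_num)).differentiableAt one_ne_zero)

lemma isSymmetric_fderiv_gradient {x : E} (hu : ContDiffAt ℝ 2 u x) :
    (fderiv ℝ (gradient u) x : E →ₗ[ℝ] E).IsSymmetric := by
  have hinner (v w : E) : ⟪fderiv ℝ (gradient u) x v, w⟫ = fderiv ℝ (fderiv ℝ u) x v w := by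
    rw [← toDual_comp_gradient, LinearIsometryEquiv.comp_fderiv]
    rfl
  intro v w
  calc ⟪fderiv ℝ (gradient u) x v, w⟫ = fderiv ℝ (fderiv ℝ u) x v w := hinner v w
    _ = fderiv ℝ (fderiv ℝ u) x w v := (hu.isSymmSndFDerivAt (by simp)).eq v w
    _ = ⟪v, fderiv ℝ (gradient u) x w⟫ := by rw [← hinner, real_inner_comm]

lemma exists_unit_gradient_eq_norm_smul (hU : IsOpen U) (hUc : IsConnected U)
    (hu : ContDiffOn ℝ 2 u U) (hgrad : ∀ x ∈ U, gradient u x ≠ 0)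
    (hhess : ∀ x ∈ U, ∀ v, ⟪v, gradient u x⟫ = 0 → fderiv ℝ (gradient u) x v = 0) :
    ∃ e : E, ‖e‖ = 1 ∧ ∀ x ∈ U, gradient u x = ‖gradient u x‖ • e := by
  obtain ⟨x₀, hx₀⟩ := hUc.nonempty
  have hu2 : ∀ x ∈ U, ContDiffAt ℝ 2 u x := fun x hx => hu.contDiffAt (hU.mem_nhds hx)
  refine ⟨NormedSpace.normalize (gradient u x₀),
    NormedSpace.norm_normalize_eq_one_iff.mpr (hgrad x₀ hx₀), fun x hx => ?_⟩
  have hconst : NormedSpace.normalize (gradient u x) = NormedSpace.normalize (gradient u x₀) :=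
    normalize_eq_of_fderiv_mem_span hU hUc.isPreconnected
      (fun y hy => differentiableAt_gradient (hu2 y hy)) hgrad
      (fun y hy w => apply_mem_span_singleton_of_isSymmetric
        (isSymmetric_fderiv_gradient (hu2 y hy)) (hhess y hy) w) hx hx₀
  rw [← hconst, NormedSpace.norm_smul_normalize]

lemma isOuterNormal_gradient {V : Set E} {g : E → ℝ} {p : E} (hV : IsOpen V) (hpV : p ∈ V)
    (hpΩ : p ∉ Ω) (hg : ContinuousOn g V) (hgp : DifferentiableAt ℝ g p)
    (hgrad : gradient g p ≠ 0) (hΩV : Ω ∩ V = {x ∈ V | g x < 0}) :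
    IsOuterNormal Ω p (gradient g p) := by
  refine ⟨hgrad, fun d hd => Eventually.frequently ?_⟩
  have hgp_nonneg : 0 ≤ g p := not_lt.mp fun h => hpΩ (hΩV.ge ⟨hpV, h⟩).1
  have hderiv : HasDerivAt (fun t : ℝ => g (p + t • d)) ⟪gradient g p, d⟫ 0 := by
    simpa [inner_gradient_left] using
      hasDerivAt_comp_add_smul (v := d) (t := 0) (by simpa using hgp)
  have hincr : ∀ᶠ t in 𝓝[>] (0 : ℝ), g p < g (p + t • d) := by
    have hslope := (hasDerivWithinAt_iff_tendsto_slope' self_notMem_Ioi).mp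
      (hderiv.hasDerivWithinAt (s := Ioi 0))
    filter_upwards [hslope.eventually (lt_mem_nhds hd), self_mem_nhdsWithin] with t ht ht0
    rw [slope_def_field, sub_zero, zero_smul, add_zero] at ht
    exact sub_pos.mp ((div_pos_iff_of_pos_right ht0).mp ht)
  have hmemV : ∀ᶠ t in 𝓝[>] (0 : ℝ), p + t • d ∈ V :=
    nhdsWithin_le_nhds ((show Continuous fun t : ℝ => p + t • d by fun_prop).continuousAt
      (hV.mem_nhds (by simpa using hpV)))
  filter_upwards [hincr, hmemV] with t htg htV
  rw [mem_closure_iff_frequently, not_frequently]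
  filter_upwards [hV.mem_nhds htV, (hg.continuousAt (hV.mem_nhds htV)).eventually
    (lt_mem_nhds (hgp_nonneg.trans_lt htg))] with x hxV hgx hxΩ
  exact (hΩV.le ⟨hxΩ, hxV⟩).2.not_gt hgx

lemma IsCkDomain.exists_isOuterNormal {k : ℕ∞} {Ω : Set (EuclideanSpace ℝ (Fin n))}
    (hΩ : IsCkDomain k Ω) (hk : k ≠ 0) : ∀ p ∈ frontier Ω, ∃ ν, IsOuterNormal Ω p ν := by
  intro p hp
  obtain ⟨-, hopen, -, hboundary⟩ := hΩ
  obtain ⟨V, g, hV, hpV, hg, hgrad, hΩV⟩ := hboundary p hp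
  have hgp : DifferentiableAt ℝ g p :=
    (hg.contDiffAt (hV.mem_nhds hpV)).differentiableAt (by exact_mod_cast hk)
  exact ⟨gradient g p, isOuterNormal_gradient hV hpV (hopen.frontier_eq ▸ hp).2 hg.continuousOn
    hgp (hgrad p hpV) hΩV⟩

/-- `u ∈ C¹(cl Ω)`: `u` is differentiable in `Ω`, and `u` and `∇u` extend continuously to `cl Ω`,
the latter by the vector field `Du`. Recording `Du` is necessary because `gradient u` need not be
meaningful on `∂Ω`. -/
structure IsC1OnClosure (Ω : Set E) (u : E → ℝ) (Du : E → E) : Prop where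
  differentiableOn : DifferentiableOn ℝ u Ω
  continuousOn : ContinuousOn u (closure Ω)
  continuousOn_grad : ContinuousOn Du (closure Ω)
  grad_eq : ∀ x ∈ Ω, Du x = gradient u x

lemma IsC1OnClosure.isOpen_setOf_gradient_ne_zero (hu : IsC1OnClosure Ω u Du) (hΩ : IsOpen Ω) :
    IsOpen {x ∈ Ω | gradient u x ≠ 0} :=
  ((hu.continuousOn_grad.mono subset_closure).congr fun x hx =>
    (hu.grad_eq x hx).symm).isOpen_inter_preimage hΩ isOpen_compl_singleton

lemma IsC1OnClosure.eventually_ne_of_isOuterNormal (hu : IsC1OnClosure Ω u Du) (hΩ : IsOpen Ω)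
    {p ν : E} (hp : p ∈ closure Ω) (hν : IsOuterNormal Ω p ν)
    (hconst : ∀ᶠ q in 𝓝[frontier Ω] p, u q = u p) (hDu : Du p ≠ 0) :
    ∀ᶠ z in 𝓝[Ω] p, u z ≠ u p := by
  obtain ⟨d, hνd, hDud⟩ := exists_inner_pos_and_inner_ne_zero hν.1 hDu
  have htransversal : ∀ᶠ x in 𝓝[closure Ω] p, ⟪Du x, d⟫ ≠ 0 :=
    ((hu.continuousOn_grad p hp).inner continuousWithinAt_const).eventually_ne hDud
  filter_upwards [hν.eventually_exists_exit hΩ hνd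
    ((eventually_nhdsWithin_iff.mp htransversal).and (eventually_nhdsWithin_iff.mp hconst))]
  rintro z ⟨s, hs, hbefore, hexit, hnear⟩ hzp
  have hline : Continuous fun t : ℝ => z + t • d := by fun_prop
  have hcont : ContinuousOn (fun t : ℝ => u (z + t • d)) (Icc 0 s) :=
    hu.continuousOn.comp hline.continuousOn
      (mapsTo_Icc_closure_of_mapsTo_Ico hline hs.ne hbefore)
  have hends : u (z + (0 : ℝ) • d) = u (z + s • d) := by
    rw [zero_smul, add_zero, hzp, (hnear (right_mem_Icc.mpr hs.le)).2 hexit]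
  obtain ⟨c, hc, hzero⟩ := exists_hasDerivAt_eq_zero hs hcont hends fun t ht =>
    hasDerivAt_comp_add_smul (hu.differentiableOn.differentiableAt
      (hΩ.mem_nhds (hbefore (Ioo_subset_Ico_self ht))))
  have hcΩ : z + c • d ∈ Ω := hbefore (Ioo_subset_Ico_self hc)
  refine (hnear (Ioo_subset_Icc_self hc)).1 (subset_closure hcΩ) ?_
  rw [hu.grad_eq _ hcΩ, inner_gradient_left, hzero]

lemma IsC1OnClosure.eq_along_segment (hu : IsC1OnClosure Ω u Du) (hU : IsOpen U) (hUΩ : U ⊆ Ω)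
    (hu2 : ContDiffOn ℝ 2 u U) {v : E} (hgrad : ∀ y ∈ U, ⟪gradient u y, v⟫ = 0)
    (hhess : ∀ y ∈ U, fderiv ℝ (gradient u) y v = 0) {x : E} {s : ℝ} (hs : 0 < s)
    (hseg : MapsTo (fun t : ℝ => x + t • v) (Ico 0 s) U) :
    ∀ t ∈ Icc 0 s, u (x + t • v) = u x ∧ Du (x + t • v) = Du x := by
  have hDu : ∀ y ∈ U, Du =ᶠ[𝓝 y] gradient u := fun y hy =>
    eventually_of_mem (hU.mem_nhds hy) fun z hz => hu.grad_eq z (hUΩ hz)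
  have hcd : ∀ y ∈ U, ContDiffAt ℝ 2 u y := fun y hy => hu2.contDiffAt (hU.mem_nhds hy)
  refine fun t ht => ⟨?_, ?_⟩
  · exact eq_along_segment_of_fderiv_apply_eq_zero (hu.continuousOn.mono (closure_mono hUΩ))
      (fun y hy => (hcd y hy).differentiableAt two_ne_zero)
      (fun y hy => inner_gradient_left.symm.trans (hgrad y hy)) hs hseg t ht
  · exact eq_along_segment_of_fderiv_apply_eq_zero (hu.continuousOn_grad.mono (closure_mono hUΩ))
      (fun y hy => (differentiableAt_gradient (hcd y hy)).congr_of_eventuallyEq (hDu y hy))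
      (fun y hy => by rw [(hDu y hy).fderiv_eq, hhess y hy]) hs hseg t ht

lemma IsC1OnClosure.add_mem_connectedComponentIn (hu : IsC1OnClosure Ω u Du) (hΩ : IsOpen Ω)
    (hnormal : ∀ p ∈ frontier Ω, ∃ ν, IsOuterNormal Ω p ν)
    (hlc : ∀ p ∈ frontier Ω, ∀ᶠ q in 𝓝[frontier Ω] p, u q = u p) {x₀ : E}
    (hU : U = connectedComponentIn {x ∈ Ω | gradient u x ≠ 0} x₀) (hu2 : ContDiffOn ℝ 2 u U)
    {v : E} (hgrad : ∀ y ∈ U, ⟪gradient u y, v⟫ = 0)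
    (hhess : ∀ y ∈ U, fderiv ℝ (gradient u) y v = 0) {x : E} (hx : x ∈ U) : x + v ∈ U := by
  have hUo : IsOpen U := hU ▸ (hu.isOpen_setOf_gradient_ne_zero hΩ).connectedComponentIn
  have hUreg : U ⊆ {x ∈ Ω | gradient u x ≠ 0} := hU ▸ connectedComponentIn_subset _ _
  have hUΩ : U ⊆ Ω := fun y hy => (hUreg hy).1
  have hline : Continuous fun t : ℝ => x + t • v := by fun_prop
  by_contra hxv
  obtain ⟨s, ⟨hs, -⟩, hseg, hexit⟩ := exists_mapsTo_Ico_and_mem_frontier hline hUo zero_le_one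
    (by simpa using hx) (by simpa using hxv)
  rw [hUo.frontier_eq] at hexit
  set y := x + s • v
  have hconst := hu.eq_along_segment hUo hUΩ hu2 hgrad hhess hs hseg
  obtain ⟨huy, hDuy⟩ : u y = u x ∧ Du y = Du x := hconst s (right_mem_Icc.mpr hs.le)
  have hDuy0 : Du y ≠ 0 := by
    rw [hDuy, hu.grad_eq x (hUΩ hx)]
    exact (hUreg hx).2
  have hycl : y ∈ closure Ω := closure_mono hUΩ hexit.1
  have hyΩ : y ∉ Ω := fun hyΩ => hexit.2 <| by
    rw [hU] at hexit ⊢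
    exact closure_connectedComponentIn_inter_subset _ _
      ⟨hexit.1, hyΩ, hu.grad_eq y hyΩ ▸ hDuy0⟩
  have hyfr : y ∈ frontier Ω := by
    rw [hΩ.frontier_eq]
    exact ⟨hycl, hyΩ⟩
  obtain ⟨ν, hν⟩ := hnormal y hyfr
  have happroach : Tendsto (fun t : ℝ => x + t • v) (𝓝[<] s) (𝓝[Ω] y) :=
    tendsto_nhdsWithin_iff.mpr ⟨hline.continuousAt.continuousWithinAt,
      eventually_of_mem (Ico_mem_nhdsLT hs) fun t ht => hUΩ (hseg ht)⟩
  obtain ⟨t, hne, ht⟩ := ((happroach.eventually (hu.eventually_ne_of_isOuterNormal hΩ hycl hν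
    (hlc y hyfr) hDuy0)).and (Ico_mem_nhdsLT hs)).exists
  exact hne ((hconst t (Ico_subset_Icc_self ht)).1.trans huy.symm)

theorem splitting_lemma_general (hΩ : IsOpen Ω)
    (hnormal : ∀ p ∈ frontier Ω, ∃ ν, IsOuterNormal Ω p ν) (hu : IsC1OnClosure Ω u Du)
    (hlc : ∀ p ∈ frontier Ω, ∀ᶠ q in 𝓝[frontier Ω] p, u q = u p)
    {Ω₀ : Set E} {x₀ : E} (hx₀ : x₀ ∈ {x ∈ Ω | gradient u x ≠ 0})
    (hΩ₀ : Ω₀ = connectedComponentIn {x ∈ Ω | gradient u x ≠ 0} x₀) (hu2 : ContDiffOn ℝ 2 u Ω₀)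
    (hhess : ∀ x ∈ Ω₀, ∀ v, ⟪v, gradient u x⟫ = 0 → fderiv ℝ (gradient u) x v = 0) :
    ∃ e : E, ‖e‖ = 1 ∧ ∃ I : Set ℝ, IsOpen I ∧ I.OrdConnected ∧
      ∃ u₀ : ℝ → ℝ, (∀ t ∈ I, DifferentiableAt ℝ u₀ t ∧ 0 < deriv u₀ t) ∧
        Ω₀ = {x | ⟪x, e⟫ ∈ I} ∧ ∀ x ∈ Ω₀, u x = u₀ ⟪x, e⟫ := by
  have hopen : IsOpen Ω₀ := hΩ₀ ▸ (hu.isOpen_setOf_gradient_ne_zero hΩ).connectedComponentIn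
  have hconn : IsConnected Ω₀ := hΩ₀ ▸ isConnected_connectedComponentIn_iff.mpr hx₀
  have hreg : Ω₀ ⊆ {x ∈ Ω | gradient u x ≠ 0} := hΩ₀ ▸ connectedComponentIn_subset _ _
  have hsub : Ω₀ ⊆ Ω := fun x hx => (hreg hx).1
  obtain ⟨e, he, hgrad⟩ :=
    exists_unit_gradient_eq_norm_smul hopen hconn hu2 (fun x hx => (hreg hx).2) hhess
  have hee := real_inner_smul_left_self_of_norm_eq_one he
  have horth {v : E} (hv : ⟪v, e⟫ = 0) : ∀ y ∈ Ω₀, ⟪v, gradient u y⟫ = 0 := fun y hy => by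
    rw [hgrad y hy, real_inner_smul_right, hv, mul_zero]
  have hinv : ∀ x ∈ Ω₀, ∀ v, ⟪v, e⟫ = 0 → x + v ∈ Ω₀ := fun x hx v hv =>
    hu.add_mem_connectedComponentIn hΩ hnormal hlc hΩ₀ hu2
      (fun y hy => (real_inner_comm _ _).trans (horth hv y hy))
      (fun y hy => hhess y hy v (horth hv y hy)) hx
  obtain ⟨I, hIopen, hIord, hI⟩ :=
    exists_isOpen_ordConnected_eq_setOf_inner_mem hopen hconn.isPreconnected he hinv
  refine ⟨e, he, I, hIopen, hIord, fun t => u (t • e), fun t ht => ?_, hI, fun x hx => ?_⟩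
  · have hte : t • e ∈ Ω₀ := by rwa [hI, mem_ofPred_eq, hee]
    have hderiv := hasDerivAt_comp_smul_of_gradient_eq he
      (hu.differentiableOn.differentiableAt (hΩ.mem_nhds (hsub hte))) (hgrad _ hte)
    exact ⟨hderiv.differentiableAt, hderiv.deriv ▸ norm_pos_iff.mpr (hreg hte).2⟩
  · have hv : ⟪⟪x, e⟫ • e - x, e⟫ = 0 := by rw [inner_sub_left, hee, sub_self]
    have hline : MapsTo (fun t : ℝ => x + t • (⟪x, e⟫ • e - x)) (Ico 0 1) Ω₀ := fun t _ =>
      hinv x hx _ (by rw [real_inner_smul_left, hv, mul_zero])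
    have hconst := hu.eq_along_segment hopen hsub hu2
      (fun y hy => (real_inner_comm _ _).trans (horth hv y hy))
      (fun y hy => hhess y hy _ (horth hv y hy)) one_pos hline 1 (right_mem_Icc.mpr zero_le_one)
    simpa using hconst.1.symm

end Gradient

/-- Proposition 4.6 of the paper (the splitting lemma), in `ℝⁿ`: on a connected component
`Ω₀` of `Ω ∖ crit(u)` where the level sets of `u` are totally geodesic with `|∇u|` locally
constant on them, `Ω₀` is an open slab and `u` is one-dimensional and strictly increasing. -/
theorem splitting_lemma
    (n : ℕ) (Ω : Set (EuclideanSpace ℝ (Fin n)))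
    (hΩ : IsCkDomain 1 Ω)
    (a : ℝ → ℝ) (hacont : ContinuousOn a (Ici 0)) (haC1 : ContDiffOn ℝ 1 a (Ioi 0))
    (hapos : ∀ t > (0 : ℝ), 0 < a t) (hlam : ∀ t > (0 : ℝ), 0 < lam1 a t)
    (f : ℝ → ℝ) (hf : ContDiff ℝ 1 f)
    (u : EuclideanSpace ℝ (Fin n) → ℝ)
    (hu1 : ContDiffOn ℝ 1 u Ω) (hucl : ContinuousOn u (closure Ω))
    (hDuext : ∃ Du : EuclideanSpace ℝ (Fin n) → EuclideanSpace ℝ (Fin n),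
      ContinuousOn Du (closure Ω) ∧ ∀ x ∈ Ω, Du x = gradient u x)
    (hnc : ¬ ∃ c : ℝ, ∀ x ∈ Ω, u x = c)
    (hsol : IsWeakSolution a f Ω u)
    (hlc : ∀ p ∈ frontier Ω, ∃ V ∈ 𝓝 p, ∀ q ∈ V ∩ frontier Ω, u q = u p)
    (Ω₀ : Set (EuclideanSpace ℝ (Fin n))) (x₀ : EuclideanSpace ℝ (Fin n))
    (hx₀ : x₀ ∈ {x ∈ Ω | gradient u x ≠ 0})
    (hΩ₀ : Ω₀ = connectedComponentIn {x ∈ Ω | gradient u x ≠ 0} x₀)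
    (hu2 : ContDiffOn ℝ 2 u Ω₀)
    (hhess : ∀ x ∈ Ω₀, ∀ X Y : EuclideanSpace ℝ (Fin n), ⟪X, gradient u x⟫ = 0 →
      ⟪(fderiv ℝ (gradient u) x) X, Y⟫ = 0) :
    ∃ e : EuclideanSpace ℝ (Fin n), ‖e‖ = 1 ∧
      ∃ I : Set ℝ, IsOpen I ∧ I.OrdConnected ∧
        ∃ u₀ : ℝ → ℝ, (∀ t ∈ I, DifferentiableAt ℝ u₀ t ∧ 0 < deriv u₀ t) ∧
          Ω₀ = {x | ⟪x, e⟫ ∈ I} ∧ ∀ x ∈ Ω₀, u x = u₀ ⟪x, e⟫ := by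
  obtain ⟨Du, hDuc, hDu⟩ := hDuext
  exact splitting_lemma_general hΩ.2.1 (hΩ.exists_isOuterNormal one_ne_zero)
    ⟨hu1.differentiableOn one_ne_zero, hucl, hDuc, hDu⟩
    (fun p hp => mem_nhdsWithin_iff_exists_mem_nhds_inter.mpr (hlc p hp)) hx₀ hΩ₀ hu2
    fun x hx v hv => inner_self_eq_zero.mp (hhess x hx v _ hv)
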